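/- Let d be a positive integer and I a square-free monomial ideal of S with ρ_d(I) > 0 and I generated in degrees ≥ d. Then the following are equivalent: (1) sdepth_S I = d; (2) there exist square-free monomials of degree d in I which generate an ideal I' such that ρ_d(I') > ρ_{d+1}(I'). -/

import Mathlib

open MvPolynomial

/-- The square-free monomial `∏ i ∈ T, X i` associated to a set `T` of variables. -/
noncomputable def sqMon (K : Type) [Field K] {n : ℕ} (T : Finset (Fin n)) :
    MvPolynomial (Fin n) K :=
  ∏ i ∈ T, X i

/-- `GenBySqMonOfDeg K P I` means: `I` is generated by square-free monomials whose
degrees satisfy the predicate `P`. -/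
def GenBySqMonOfDeg (K : Type) [Field K] {n : ℕ} (P : ℕ → Prop)
    (I : Ideal (MvPolynomial (Fin n) K)) : Prop :=
  ∃ G : Set (Finset (Fin n)), (∀ T ∈ G, P T.card) ∧ I = Ideal.span (sqMon K '' G)

/-- `rho K d I` : the number of square-free monomials of degree `d` belonging to `I`. -/
noncomputable def rho (K : Type) [Field K] {n : ℕ} (d : ℕ)
    (I : Ideal (MvPolynomial (Fin n) K)) : ℕ :=
  Set.ncard {T : Finset (Fin n) | T.card = d ∧ sqMon K T ∈ I}

/-- The maximal graded ideal `(x_1, …, x_n)` of `K[x_1, …, x_n]`. -/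
noncomputable def maxGraded (K : Type) [Field K] (n : ℕ) :
    Ideal (MvPolynomial (Fin n) K) :=
  Ideal.span (Set.range (X : Fin n → MvPolynomial (Fin n) K))

/-- The depth of the module `M` with respect to the ideal `I` : the supremum of the
lengths of `M`-regular sequences consisting of elements of `I`. -/
noncomputable def moduleDepth {R : Type} [CommRing R] (I : Ideal R)
    (M : Type) [AddCommGroup M] [Module R M] : ℕ∞ :=
  sSup {k : ℕ∞ | ∃ rs : List R, k = (rs.length : ℕ∞) ∧ (∀ r ∈ rs, r ∈ I) ∧
    RingTheory.Sequence.IsRegular M rs}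

/-- The `R`-module `I/J` (more precisely `I/(I ∩ J)`, which is `I/J` when `J ≤ I`). -/
noncomputable abbrev idealQuot {R : Type} [CommRing R] (I J : Ideal R) : Type :=
  ↥I ⧸ (Submodule.comap I.subtype (J : Submodule R R))

/-- The poset (here: set, ordered by `⊆`, i.e. divisibility of square-free monomials)
of square-free monomials lying in `I \ J`. -/
def monoPoset (K : Type) [Field K] {n : ℕ} (I J : Ideal (MvPolynomial (Fin n) K)) :
    Set (Finset (Fin n)) :=
  {T | sqMon K T ∈ I ∧ sqMon K T ∉ J}

/-- `C` is a partition of `P` into intervals `[p.1, p.2] = {T | p.1 ⊆ T ⊆ p.2}`: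
the intervals have endpoints in `P` and every element of `P` lies in exactly one
of them. -/
def IntervalPartition {n : ℕ} (P : Set (Finset (Fin n)))
    (C : Finset (Finset (Fin n) × Finset (Fin n))) : Prop :=
  (∀ p ∈ C, p.1 ∈ P ∧ p.2 ∈ P ∧ p.1 ⊆ p.2) ∧
  ∀ T ∈ P, ∃! p, p ∈ C ∧ p.1 ⊆ T ∧ T ⊆ p.2

/-- The Stanley depth of `I/J`: the maximum over interval partitions of the poset of
square-free monomials of `I \ J` of the minimal degree of an upper endpoint. -/
noncomputable def sdepthQuot (K : Type) [Field K] {n : ℕ}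
    (I J : Ideal (MvPolynomial (Fin n) K)) : ℕ :=
  sSup {d : ℕ | ∃ C, IntervalPartition (monoPoset K I J) C ∧ ∀ p ∈ C, d ≤ p.2.card}

/-!
A partition of `P_I` whose intervals all end in degree at least `d + 1` gives each degree `d`
monomial `T` a multiple `T ⋖ f T` inside the interval that starts at `T`, and disjointness makes `f`
injective. Conversely, an injective choice of such multiples gives the two-element intervals
`[T, f T]`, and the remaining monomials can be covered by singletons. By Hall's marriage theorem,
the obstruction to such an `f` is a set of degree `d` monomials generating an ideal with
`ρ_{d+1} < ρ_d`. The same argument works in any order-convex poset, such as that of the monomials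
in `I \ J`, with Hall's condition counting only the multiples that stay in the poset.
-/

section Finset

theorem covBy_iff_subset_and_card_eq {α : Type*} {S T : Finset α} :
    S ⋖ T ↔ S ⊆ T ∧ T.card = S.card + 1 := by
  refine ⟨fun h => ⟨h.le, (Order.covBy_iff_add_one_eq.1 h.card_finset).symm⟩, ?_⟩
  rintro ⟨hST, hcard⟩
  classical
  exact Finset.covBy_iff_card_sdiff_eq_one.2
    ⟨hST, by rw [Finset.card_sdiff_of_subset hST, hcard, Nat.add_sub_cancel_left]⟩

theorem exists_injOn_rel_iff_forall_ncard_le {α β : Type*} [Finite β] [Nonempty β]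
    (r : α → β → Prop) (A : Set α) :
    (∃ f : α → β, A.InjOn f ∧ ∀ a ∈ A, r a (f a)) ↔
      ∀ s ⊆ A, s.ncard ≤ {b | ∃ a ∈ s, r a b}.ncard := by
  classical
  constructor
  · rintro ⟨f, hinj, hr⟩ s hs
    rw [← (hinj.mono hs).ncard_image]
    refine Set.ncard_le_ncard ?_ (Set.toFinite _)
    rintro _ ⟨a, ha, rfl⟩
    exact ⟨a, ha, hr a (hs ha)⟩
  · intro hall
    have := Fintype.ofFinite β
    obtain ⟨f, hinj, hr⟩ :=
      (Fintype.all_card_le_filter_rel_iff_exists_injective fun (a : A) b => r a b).1 fun s => by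
        have hs := hall (Subtype.val '' (s : Set A)) (by simp)
        rw [Set.ncard_image_of_injective _ Subtype.val_injective, Set.ncard_coe_finset] at hs
        simpa [← Set.ncard_coe_finset] using hs
    refine ⟨fun a => if ha : a ∈ A then f ⟨a, ha⟩ else Classical.arbitrary β, ?_, ?_⟩
    · intro a ha b hb hab
      simpa [ha, hb, hinj.eq_iff] using hab
    · intro a ha
      simpa [ha] using hr ⟨a, ha⟩

end Finset

section IntervalPartition

variable {n d : ℕ} {P A : Set (Finset (Fin n))} {f : Finset (Fin n) → Finset (Fin n)}

/-- The degree `d` part of a poset of square-free monomials, where `T` stands for the monomial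
`∏ i ∈ T, x_i` of degree `T.card`. -/
def degreeSlice (P : Set (Finset (Fin n))) (d : ℕ) : Set (Finset (Fin n)) :=
  {T | T.card = d ∧ T ∈ P}

/-- The intervals `[T, f T]` for `T ∈ A`, together with the singletons `[T, T]` for the `T ∈ P`
which are neither in `A` nor of the form `f S` with `S ∈ A`. -/
noncomputable def matchingIntervals (P A : Set (Finset (Fin n)))
    (f : Finset (Fin n) → Finset (Fin n)) : Finset (Finset (Fin n) × Finset (Fin n)) :=
  ((fun T => (T, f T)) '' A ∪ (fun T => (T, T)) '' (P \ (A ∪ f '' A))).toFinite.toFinset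

theorem mem_matchingIntervals {p : Finset (Fin n) × Finset (Fin n)} :
    p ∈ matchingIntervals P A f ↔
      (∃ T ∈ A, (T, f T) = p) ∨ ∃ T ∈ P \ (A ∪ f '' A), (T, T) = p := by
  simp only [matchingIntervals, Set.Finite.mem_toFinset, Set.mem_union, Set.mem_image]

theorem mem_matchingIntervals_and_subset_iff (hcov : ∀ S ∈ A, S ⋖ f S) {T : Finset (Fin n)}
    (hT : T ∈ P) {p : Finset (Fin n) × Finset (Fin n)} :
    p ∈ matchingIntervals P A f ∧ p.1 ⊆ T ∧ T ⊆ p.2 ↔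
      (∃ S ∈ A, (S, f S) = p ∧ (T = S ∨ T = f S)) ∨ T ∉ A ∪ f '' A ∧ (T, T) = p := by
  rw [mem_matchingIntervals]
  constructor
  · rintro ⟨⟨S, hS, rfl⟩ | ⟨S, hS, rfl⟩, hST, hTS⟩
    · exact .inl ⟨S, hS, rfl, (hcov S hS).eq_or_eq hST hTS⟩
    · obtain rfl := subset_antisymm hST hTS
      exact .inr ⟨hS.2, rfl⟩
  · rintro (⟨S, hS, rfl, rfl | rfl⟩ | ⟨hTA, rfl⟩)
    · exact ⟨.inl ⟨_, hS, rfl⟩, subset_rfl, (hcov _ hS).le⟩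
    · exact ⟨.inl ⟨S, hS, rfl⟩, (hcov S hS).le, subset_rfl⟩
    · exact ⟨.inr ⟨T, ⟨hT, hTA⟩, rfl⟩, subset_rfl, subset_rfl⟩

theorem intervalPartition_matchingIntervals (hAP : A ⊆ P) (hfP : Set.MapsTo f A P)
    (hinj : A.InjOn f) (hcov : ∀ T ∈ A, T ⋖ f T) (hdisj : Disjoint A (f '' A)) :
    IntervalPartition P (matchingIntervals P A f) := by
  have notMem {S} (hS : S ∈ A) : f S ∉ A := fun h =>
    hdisj.notMem_of_mem_left h (Set.mem_image_of_mem f hS)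
  refine ⟨fun p hp => ?_, fun T hT => ?_⟩
  · obtain ⟨S, hS, rfl⟩ | ⟨S, hS, rfl⟩ := mem_matchingIntervals.1 hp
    · exact ⟨hAP hS, hfP hS, (hcov S hS).le⟩
    · exact ⟨hS.1, hS.1, subset_rfl⟩
  simp only [mem_matchingIntervals_and_subset_iff hcov hT]
  by_cases hTA : T ∈ A
  · refine ⟨(T, f T), .inl ⟨T, hTA, rfl, .inl rfl⟩, ?_⟩
    rintro _ (⟨S, hS, rfl, rfl | rfl⟩ | ⟨hT', rfl⟩)
    · rfl
    · exact absurd hTA (notMem hS)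
    · exact absurd (.inl hTA) hT'
  by_cases hTf : T ∈ f '' A
  · obtain ⟨R, hR, rfl⟩ := hTf
    refine ⟨(R, f R), .inl ⟨R, hR, rfl, .inr rfl⟩, ?_⟩
    rintro _ (⟨S, hS, rfl, rfl | hRS⟩ | ⟨hT', rfl⟩)
    · exact absurd hS hTA
    · rw [hinj hR hS hRS]
    · exact absurd (.inr ⟨R, hR, rfl⟩) hT'
  · refine ⟨(T, T), .inr ⟨fun h => h.elim hTA hTf, rfl⟩, ?_⟩
    rintro _ (⟨S, hS, rfl, rfl | rfl⟩ | ⟨-, rfl⟩)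
    · exact absurd hS hTA
    · exact absurd ⟨S, hS, rfl⟩ hTf
    · rfl

theorem exists_intervalPartition (P : Set (Finset (Fin n))) : ∃ C, IntervalPartition P C :=
  ⟨matchingIntervals P ∅ id, intervalPartition_matchingIntervals (Set.empty_subset P)
    (Set.mapsTo_empty id P) (Set.injOn_empty id) (by simp) (by simp)⟩

theorem IntervalPartition.exists_injOn_covBy
    {C : Finset (Finset (Fin n) × Finset (Fin n))} (hC : IntervalPartition P C)
    (hP : P.OrdConnected) (hmin : ∀ T ∈ P, d ≤ T.card) (htop : ∀ p ∈ C, d + 1 ≤ p.2.card) :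
    ∃ f : Finset (Fin n) → Finset (Fin n), (degreeSlice P d).InjOn f ∧
      ∀ T ∈ degreeSlice P d, T ⋖ f T ∧ f T ∈ P := by
  have exists_cover : ∀ T ∈ degreeSlice P d, ∃ V U, T ⋖ V ∧ V ∈ P ∧ (T, U) ∈ C ∧ V ⊆ U := by
    rintro T ⟨hTd, hT⟩
    obtain ⟨⟨S, U⟩, ⟨hp, hST, hTU⟩, -⟩ := hC.2 T hT
    obtain ⟨hS, hU, -⟩ := hC.1 _ hp
    obtain rfl : S = T := Finset.eq_of_subset_of_card_le hST (hTd.trans_le (hmin S hS))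
    have hlt : S ⊂ U :=
      hTU.ssubset_of_ne fun h => (hTd.trans_lt (htop _ hp)).ne (congrArg Finset.card h)
    obtain ⟨V, hSV, hVU⟩ := exists_covBy_le_of_lt hlt
    exact ⟨V, U, hSV, hP.out hS hU ⟨hSV.le, hVU⟩, hp, hVU⟩
  choose! f U hcov hfP hUC hfU using exists_cover
  refine ⟨f, fun S hS T hT hST => ?_, fun T hT => ⟨hcov T hT, hfP T hT⟩⟩
  have hfS : S ⊆ f S ∧ f S ⊆ U S := ⟨(hcov S hS).le, hfU S hS⟩
  have hfT : T ⊆ f S ∧ f S ⊆ U T := hST ▸ ⟨(hcov T hT).le, hfU T hT⟩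
  exact congrArg Prod.fst
    ((hC.2 (f S) (hfP S hS)).unique ⟨hUC S hS, hfS⟩ ⟨hUC T hT, hfT⟩)

theorem exists_intervalPartition_succ_le_card_iff
    (hP : P.OrdConnected) (hmin : ∀ T ∈ P, d ≤ T.card) :
    (∃ C, IntervalPartition P C ∧ ∀ p ∈ C, d + 1 ≤ p.2.card) ↔
      ∃ f : Finset (Fin n) → Finset (Fin n), (degreeSlice P d).InjOn f ∧
        ∀ T ∈ degreeSlice P d, T ⋖ f T ∧ f T ∈ P := by
  refine ⟨fun ⟨C, hC, htop⟩ => hC.exists_injOn_covBy hP hmin htop, ?_⟩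
  rintro ⟨f, hinj, hf⟩
  have hcard {T} (hT : T ∈ degreeSlice P d) : (f T).card = d + 1 := by
    rw [(covBy_iff_subset_and_card_eq.1 (hf T hT).1).2, hT.1]
  have hdisj : Disjoint (degreeSlice P d) (f '' degreeSlice P d) := by
    rw [Set.disjoint_right]
    rintro _ ⟨T, hT, rfl⟩ hfT
    exact d.succ_ne_self ((hcard hT).symm.trans hfT.1)
  refine ⟨_, intervalPartition_matchingIntervals (fun T hT => hT.2)
    (fun T hT => (hf T hT).2) hinj (fun T hT => (hf T hT).1) hdisj, fun p hp => ?_⟩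
  obtain ⟨T, hT, rfl⟩ | ⟨T, ⟨hTP, hT⟩, rfl⟩ := mem_matchingIntervals.1 hp
  · exact (hcard hT).ge
  · exact (hmin T hTP).lt_of_ne fun h => hT (.inl ⟨h.symm, hTP⟩)

theorem exists_intervalPartition_succ_le_card_iff_forall_ncard_le
    (hP : P.OrdConnected) (hmin : ∀ T ∈ P, d ≤ T.card) :
    (∃ C, IntervalPartition P C ∧ ∀ p ∈ C, d + 1 ≤ p.2.card) ↔
      ∀ G ⊆ degreeSlice P d, G.ncard ≤ {V | ∃ T ∈ G, T ⋖ V ∧ V ∈ P}.ncard := by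
  rw [exists_intervalPartition_succ_le_card_iff hP hmin]
  exact exists_injOn_rel_iff_forall_ncard_le (fun T V => T ⋖ V ∧ V ∈ P) _

end IntervalPartition

section SquareFree

variable {n d : ℕ} {K : Type} [Field K] {G : Set (Finset (Fin n))}
  {I J : Ideal (MvPolynomial (Fin n) K)} {S T : Finset (Fin n)}

theorem sqMon_eq_monomial (T : Finset (Fin n)) :
    sqMon K T = monomial (Multiset.toFinsupp T.val) 1 := by
  rw [← Finset.sum_multiset_singleton, map_sum, monomial_sum_one]
  simp only [Multiset.toFinsupp_singleton]
  rfl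

theorem sqMon_ne_zero (T : Finset (Fin n)) : sqMon K T ≠ 0 :=
  Finset.prod_ne_zero_iff.2 fun i _ => X_ne_zero i

theorem sqMon_dvd_sqMon (h : S ⊆ T) : sqMon K S ∣ sqMon K T :=
  Finset.prod_dvd_prod_of_subset S T X h

theorem sqMon_mem_span_image_iff :
    sqMon K T ∈ Ideal.span (sqMon K '' G) ↔ ∃ S ∈ G, S ⊆ T := by
  classical
  have himage : sqMon K '' G =
      (fun s => monomial s 1) '' ((fun S => Multiset.toFinsupp S.val) '' G) := by
    simp only [Set.image_image, ← sqMon_eq_monomial]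
  have hle (S : Finset (Fin n)) :
      Multiset.toFinsupp S.val ≤ Multiset.toFinsupp T.val ↔ S ⊆ T :=
    Finsupp.orderIsoMultiset.symm.le_iff_le.trans Finset.val_le_iff
  rw [himage, mem_ideal_span_monomial_image, sqMon_eq_monomial, support_monomial]
  simp [hle]

theorem ordConnected_monoPoset (I J : Ideal (MvPolynomial (Fin n) K)) :
    (monoPoset K I J).OrdConnected :=
  ⟨fun _ hS _ hU _ hT => ⟨I.mem_of_dvd (sqMon_dvd_sqMon hT.1) hS.1,
    fun hTJ => hU.2 (J.mem_of_dvd (sqMon_dvd_sqMon hT.2) hTJ)⟩⟩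

theorem GenBySqMonOfDeg.le_card_of_sqMon_mem (hI : GenBySqMonOfDeg K (fun k => d ≤ k) I)
    (hT : sqMon K T ∈ I) : d ≤ T.card := by
  obtain ⟨G, hG, rfl⟩ := hI
  obtain ⟨S, hS, hST⟩ := sqMon_mem_span_image_iff.1 hT
  exact (hG S hS).trans (Finset.card_le_card hST)

theorem rho_bot (d : ℕ) : rho K d (⊥ : Ideal (MvPolynomial (Fin n) K)) = 0 := by
  simp [rho, sqMon_ne_zero]

theorem rho_span_of_card_eq (hG : ∀ T ∈ G, T.card = d) :
    rho K d (Ideal.span (sqMon K '' G)) = G.ncard := by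
  unfold rho
  congr 1
  ext T
  simp only [Set.mem_ofPred_eq, sqMon_mem_span_image_iff]
  constructor
  · rintro ⟨hT, S, hS, hST⟩
    rwa [← Finset.eq_of_subset_of_card_le hST (hT.trans (hG S hS).symm).le]
  · exact fun hT => ⟨hG T hT, T, hT, subset_rfl⟩

theorem exists_covBy_iff_sqMon_mem_span (hG : ∀ T ∈ G, T.card = d) :
    (∃ S ∈ G, S ⋖ T) ↔ T.card = d + 1 ∧ sqMon K T ∈ Ideal.span (sqMon K '' G) := by
  simp only [covBy_iff_subset_and_card_eq, sqMon_mem_span_image_iff]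
  grind

theorem rho_succ_span_of_subset_degreeSlice (hG : G ⊆ degreeSlice (monoPoset K I J) d) :
    rho K (d + 1) (Ideal.span (sqMon K '' G)) =
      rho K (d + 1) (Ideal.span (sqMon K '' G) ⊓ J) +
        {V | ∃ T ∈ G, T ⋖ V ∧ V ∈ monoPoset K I J}.ncard := by
  have hcov (V : Finset (Fin n)) :
      (∃ T ∈ G, T ⋖ V) ↔ V.card = d + 1 ∧ sqMon K V ∈ Ideal.span (sqMon K '' G) :=
    exists_covBy_iff_sqMon_mem_span fun T hT => (hG hT).1
  have hle : Ideal.span (sqMon K '' G) ≤ I :=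
    Ideal.span_le.2 (Set.image_subset_iff.2 fun T hT => (hG hT).2.1)
  rw [rho, ← Set.ncard_inter_add_ncard_sdiff_eq_ncard _ {V | sqMon K V ∈ J}]
  congr 2
  · ext V
    exact and_assoc
  · ext V
    have := @hle (sqMon K V)
    grind [monoPoset]

theorem le_sdepthQuot_iff (hne : (monoPoset K I J).Nonempty) {e : ℕ} :
    e ≤ sdepthQuot K I J ↔
      ∃ C, IntervalPartition (monoPoset K I J) C ∧ ∀ p ∈ C, e ≤ p.2.card := by
  let E : Set ℕ := {e | ∃ C, IntervalPartition (monoPoset K I J) C ∧ ∀ p ∈ C, e ≤ p.2.card}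
  have hE : E.Nonempty := by
    obtain ⟨C, hC⟩ := exists_intervalPartition (monoPoset K I J)
    exact ⟨0, C, hC, fun _ _ => Nat.zero_le _⟩
  have hbdd : BddAbove E := by
    obtain ⟨T, hT⟩ := hne
    refine ⟨n, ?_⟩
    rintro e ⟨C, hC, he⟩
    obtain ⟨p, ⟨hp, -⟩, -⟩ := hC.2 T hT
    exact (he p hp).trans (card_finset_fin_le p.2)
  refine ⟨fun h => ?_, fun h => le_csSup hbdd h⟩
  obtain ⟨C, hC, hle⟩ : sSup E ∈ E := Nat.sSup_mem hE hbdd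
  exact ⟨C, hC, fun p hp => h.trans (hle p hp)⟩

/-- The inequality is `ρ_{d+1}(I') - ρ_{d+1}(I' ∩ J) < ρ_d(I')`, rearranged to avoid truncated
subtraction. -/
theorem stmt_17_general (hI : GenBySqMonOfDeg K (fun k => d ≤ k) I)
    (hne : (monoPoset K I J).Nonempty) :
    sdepthQuot K I J = d ↔
      ∃ G : Set (Finset (Fin n)),
        (∀ T ∈ G, T.card = d ∧ T ∈ monoPoset K I J) ∧
        rho K (d + 1) (Ideal.span (sqMon K '' G)) <
          rho K d (Ideal.span (sqMon K '' G)) +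
            rho K (d + 1) (Ideal.span (sqMon K '' G) ⊓ J) := by
  have hmin : ∀ T ∈ monoPoset K I J, d ≤ T.card := fun T hT => hI.le_card_of_sqMon_mem hT.1
  have hle : d ≤ sdepthQuot K I J := by
    obtain ⟨C, hC⟩ := exists_intervalPartition (monoPoset K I J)
    exact (le_sdepthQuot_iff hne).2 ⟨C, hC, fun p hp => hmin p.2 (hC.1 p hp).2.1⟩
  calc sdepthQuot K I J = d
      ↔ ¬ d + 1 ≤ sdepthQuot K I J := by omega
    _ ↔ ∃ G ⊆ degreeSlice (monoPoset K I J) d,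
          {V | ∃ T ∈ G, T ⋖ V ∧ V ∈ monoPoset K I J}.ncard < G.ncard := by
        rw [le_sdepthQuot_iff hne, exists_intervalPartition_succ_le_card_iff_forall_ncard_le
          (ordConnected_monoPoset I J) hmin]
        push Not
        rfl
    _ ↔ _ := by
        refine exists_congr fun G => and_congr_right fun hG => ?_
        rw [rho_span_of_card_eq fun T hT => (hG hT).1,
          rho_succ_span_of_subset_degreeSlice hG, add_comm, add_lt_add_iff_right]

end SquareFree

/-- Corollary 4.2, the case `J = 0` of Theorem 4.1. -/
theorem stmt_17 (n : ℕ) (K : Type) [Field K] (d : ℕ) (hd : 0 < d)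
    (I : Ideal (MvPolynomial (Fin n) K))
    (hI : GenBySqMonOfDeg K (fun k => d ≤ k) I)
    (hrho : 0 < rho K d I) :
    sdepthQuot K I ⊥ = d ↔
      ∃ G : Set (Finset (Fin n)),
        (∀ T ∈ G, T.card = d ∧ sqMon K T ∈ I) ∧
        rho K (d + 1) (Ideal.span (sqMon K '' G)) <
          rho K d (Ideal.span (sqMon K '' G)) := by
  have hne : (monoPoset K I ⊥).Nonempty :=
    (Set.nonempty_of_ncard_ne_zero hrho.ne').mono fun T hT => ⟨hT.2, sqMon_ne_zero T⟩
  simpa [monoPoset, sqMon_ne_zero, rho_bot] using stmt_17_general hI hne
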